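/- Let M be a topological manifold (in particular a regular Hausdorff space), let f be a homeomorphism of M, and let W ⊆ M be open. If f(cl(U)) ⊆ cl(U) for every open set U ⊆ W, then f(x) = x for every x ∈ W. -/

import Mathlib

open Set

theorem eq_of_forall_isOpen_mem_closure {X : Type*} [TopologicalSpace X] [T2Space X] {W : Set X}
    (hW : IsOpen W) {x y : X} (hx : x ∈ W)
    (hy : ∀ U : Set X, IsOpen U → x ∈ U → U ⊆ W → y ∈ closure U) : y = x := by
  by_contra hne
  obtain ⟨V, U, hV, hU, hyV, hxU, hVU⟩ := t2_separation hne
  have hy_closure : y ∈ closure U :=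
    closure_mono inter_subset_left (hy (U ∩ W) (hU.inter hW) ⟨hxU, hx⟩ inter_subset_right)
  exact (hVU.closure_right hV).notMem_of_mem_left hyV hy_closure

theorem fixes_of_preserves_closures_general {X : Type*} [TopologicalSpace X] [T2Space X]
    (f : X → X) (W : Set X) (hW : IsOpen W)
    (h : ∀ U : Set X, IsOpen U → U ⊆ W → MapsTo f U (closure U)) :
    ∀ x ∈ W, f x = x :=
  fun _ hx ↦ eq_of_forall_isOpen_mem_closure hW hx fun U hU hxU hUW ↦ h U hU hUW hxU

/-- Let `M` be a topological manifold, `f` a homeomorphism of `M`, and `W ⊆ M` open.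
If `f(cl U) ⊆ cl U` for every open `U ⊆ W`, then `f` fixes every point of `W`. -/
theorem fixes_of_preserves_closures
    {n : ℕ} {M : Type*} [TopologicalSpace M] [T2Space M]
    [ChartedSpace (EuclideanSpace ℝ (Fin n)) M]
    (f : Homeomorph M M) (W : Set M) (hW : IsOpen W)
    (h : ∀ U : Set M, IsOpen U → U ⊆ W → ⇑f '' closure U ⊆ closure U) :
    ∀ x ∈ W, f x = x :=
  fixes_of_preserves_closures_general f W hW fun U hU hUW ↦
    (mapsTo_iff_image_subset.2 (h U hU hUW)).mono_left subset_closure
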